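/- Let φ(x,t) = t^p + a(x) t^q with 1 < p < q < ∞, a a nonnegative function in C^{0,α}(ℝⁿ) for some α ∈ (0,1], and assume q/p ≤ 1 + α/n. Let Ω ⊆ ℝⁿ be open, and suppose ℝⁿ∖Ω is locally uniformly infimally φ-fat with parameters c_fat > 0 and 0 < r_o ≤ 1. Fix a sign choice: let a*_{y,R} denote either a^+_{y,R} or a^-_{y,R}, used consistently, and φ*_{y,R}(t) = t^p + a*_{y,R} t^q. Then there is a constant c = c(n,p,q,c_fat) such that for every z ∈ ℝⁿ∖Ω, y ∈ ℝⁿ, 0 < r < r_o, R > 0, and u ∈ Lip_0(Ω) (extended by zero), the boundary Poincaré inequality holds: ⨍_{B(z,r)} φ*_{y,R}(|u|) dx ≤ c · (1 + a*_{y,R} · ((⨍_{B(z,r)} |r∇u|^p dx)^{1/p})^{q−p}) · ⨍_{B(z,r)} |r ∇u|^p dx. -/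

import Mathlib

open MeasureTheory Metric Set

noncomputable section

/-- Euclidean space `ℝⁿ`. -/
abbrev En (n : ℕ) : Type := EuclideanSpace ℝ (Fin n)

/-- Norm of the (a.e. defined, by Rademacher's theorem) gradient of `u` at `x`. -/
def gnorm {n : ℕ} (u : En n → ℝ) (x : En n) : ℝ := ‖fderiv ℝ u x‖

/-- Admissible test functions for the level-`t` capacity of `E` in `O`:
Lipschitz on the closure of `O`, `u ≥ t` on `E`, `u = 0` on `∂O`. -/
def Adm {n : ℕ} (E O : Set (En n)) (t : ℝ) : Set (En n → ℝ) :=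
  {u | (∃ K, LipschitzOnWith K u (closure O)) ∧ (∀ x ∈ E, t ≤ u x) ∧
    ∀ x ∈ frontier O, u x = 0}

/-- Level-`t` variational capacity with integrand `ψ` and normalization `ψm`. -/
def capLevel {n : ℕ} (ψ : En n → ℝ → ℝ) (ψm : ℝ → ℝ)
    (E O : Set (En n)) (t : ℝ) : ℝ :=
  sInf ((fun u => ∫ x in O, ψ x (gnorm u x) / ψm t) '' Adm E O t)

/-- Infimal capacity with integrand `ψ` and normalization `ψm`. -/
def capInfGen {n : ℕ} (ψ : En n → ℝ → ℝ) (ψm : ℝ → ℝ) (E O : Set (En n)) : ℝ :=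
  ⨅ t : Ioi (0 : ℝ), capLevel ψ ψm E O (t : ℝ)

/-- The double-phase integrand `φ(x,t) = t^p + a(x) t^q`. -/
def phi {n : ℕ} (a : En n → ℝ) (p q : ℝ) (x : En n) (t : ℝ) : ℝ :=
  t ^ p + a x * t ^ q

/-- `a_O^- = inf_{x ∈ O} a(x)`. -/
def aInfOn {n : ℕ} (a : En n → ℝ) (O : Set (En n)) : ℝ := sInf (a '' O)

/-- `a_O^+ = sup_{x ∈ O} a(x)`. -/
def aSupOn {n : ℕ} (a : En n → ℝ) (O : Set (En n)) : ℝ := sSup (a '' O)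

/-- `φ_O^-(t) = t^p + a_O^- t^q`. -/
def phiMinus {n : ℕ} (a : En n → ℝ) (p q : ℝ) (O : Set (En n)) (t : ℝ) : ℝ :=
  t ^ p + aInfOn a O * t ^ q

/-- Level-`t` variational capacity for the double-phase integrand. -/
def capPhiLevel {n : ℕ} (a : En n → ℝ) (p q t : ℝ) (E O : Set (En n)) : ℝ :=
  capLevel (phi a p q) (phiMinus a p q O) E O t

/-- Infimal `φ`-capacity. -/
def capPhiInf {n : ℕ} (a : En n → ℝ) (p q : ℝ) (E O : Set (En n)) : ℝ :=
  ⨅ t : Ioi (0 : ℝ), capPhiLevel a p q (t : ℝ) E O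

/-- Variational `p`-capacity. -/
def capP {n : ℕ} (p : ℝ) (E O : Set (En n)) : ℝ :=
  sInf ((fun u => ∫ x in O, gnorm u x ^ p) '' Adm E O 1)

/-- The rescaled set `{x ∈ B̄(0,1/2) : z + r x ∈ E}`. -/
def shiftedSet {n : ℕ} (E : Set (En n)) (z : En n) (r : ℝ) : Set (En n) :=
  {x ∈ closedBall (0 : En n) (1 / 2) | z + r • x ∈ E}

/-- Local uniform infimal `φ`-fatness with parameters `cfat` and `ro`. -/
def LocUnifPhiFat {n : ℕ} (a : En n → ℝ) (p q : ℝ) (E : Set (En n))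
    (cfat ro : ℝ) : Prop :=
  ∀ z ∈ E, ∀ r : ℝ, 0 < r → r < ro →
    cfat ≤ capPhiInf (fun x => a (z + r • x)) p q (shiftedSet E z r) (ball (0 : En n) 1)

/-- Local uniform `p`-fatness with parameters `cfat` and `ro`. -/
def LocUnifPFat {n : ℕ} (p : ℝ) (E : Set (En n)) (cfat ro : ℝ) : Prop :=
  ∀ z ∈ E, ∀ r : ℝ, 0 < r → r < ro →
    cfat ≤ capP p (shiftedSet E z r) (ball (0 : En n) 1)

/-- `Lip_0(Ω)`: Lipschitz functions with compact support contained in `Ω`,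
extended by zero to `ℝⁿ`. -/
def Lip0 {n : ℕ} (Ω : Set (En n)) : Set (En n → ℝ) :=
  {u | (∃ K, LipschitzWith K u) ∧ HasCompactSupport u ∧ tsupport u ⊆ Ω}

/-- Restricted centered maximal operator `M_R f(x) = sup_{0<r<R} ⨍_{B(x,r)} |f|`. -/
def maxOp {n : ℕ} (R : ℝ) (f : En n → ℝ) (x : En n) : ℝ :=
  ⨆ r : Ioo (0 : ℝ) R, ⨍ y in ball x (r : ℝ), |f y|

/-- The uniform probability measure on the unit ball of `ℝⁿ`. -/
def unitAvg (n : ℕ) : Measure (En n) :=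
  (volume (ball (0 : En n) 1))⁻¹ • volume.restrict (ball (0 : En n) 1)

lemma volume_unitBall_ne_zero (n : ℕ) : volume (ball (0 : En n) 1) ≠ 0 :=
  (measure_ball_pos volume _ one_pos).ne'

lemma volume_unitBall_ne_top (n : ℕ) : volume (ball (0 : En n) 1) ≠ ⊤ :=
  measure_ball_lt_top.ne

instance isProbabilityMeasure_unitAvg (n : ℕ) : IsProbabilityMeasure (unitAvg n) := by
  constructor
  simp only [unitAvg, Measure.smul_apply, Measure.restrict_apply_univ, smul_eq_mul]
  exact ENNReal.inv_mul_cancel (volume_unitBall_ne_zero n) (volume_unitBall_ne_top n)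

lemma ae_unitAvg_of_ae {n : ℕ} {P : En n → Prop} (h : ∀ᵐ x, P x) : ∀ᵐ x ∂unitAvg n, P x :=
  Measure.ae_smul_measure (ae_restrict_of_ae h) _

lemma ae_mem_unitBall (n : ℕ) : ∀ᵐ x ∂unitAvg n, x ∈ ball (0 : En n) 1 :=
  Measure.ae_smul_measure (ae_restrict_mem measurableSet_ball) _

lemma lintegral_unitAvg {n : ℕ} (f : En n → ENNReal) :
    ∫⁻ x, f x ∂unitAvg n =
      (volume (ball (0 : En n) 1))⁻¹ * ∫⁻ x in ball (0 : En n) 1, f x := by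
  simp [unitAvg, lintegral_smul_measure]

lemma lintegral_comp_homothety {n : ℕ} {f : En n → ENNReal} (hf : Measurable f) (x : En n)
    {l : ℝ} (hl : 0 < l) :
    ∫⁻ y, f (x + l • (y - x)) = ENNReal.ofReal ((l ^ n)⁻¹) * ∫⁻ y, f y := by
  rw [lintegral_sub_right_eq_self (fun y => f (x + l • y)) x]
  have h1 : Measurable fun w => f (x + w) := hf.comp (measurable_const_add x)
  have h2 : ∫⁻ y, f (x + l • y) = ∫⁻ w, f (x + w) ∂(Measure.map (l • ·) volume) :=
    (lintegral_map h1 (measurable_const_smul l)).symm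
  rw [h2, Measure.map_addHaar_smul volume hl.ne', lintegral_smul_measure,
    lintegral_add_left_eq_self f x, abs_of_pos (by positivity)]
  simp

lemma lintegral_unitAvg_comp_homothety_le {n : ℕ} {f : En n → ENNReal} (hf : Measurable f)
    {x : En n} (hx : x ∈ ball (0 : En n) 1) {l : ℝ} (hl : 0 < l) (hl1 : l ≤ 1) :
    ∫⁻ y, f (x + l • (y - x)) ∂unitAvg n ≤
      ENNReal.ofReal ((l ^ n)⁻¹) * ∫⁻ y, f y ∂unitAvg n := by
  set B := ball (0 : En n) 1 with hB
  have h := lintegral_comp_homothety (hf.indicator (s := B) measurableSet_ball) x hl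
  rw [lintegral_indicator measurableSet_ball] at h
  rw [lintegral_unitAvg, lintegral_unitAvg, mul_left_comm, ← h]
  refine mul_le_mul' le_rfl ?_
  rw [← lintegral_indicator measurableSet_ball]
  refine lintegral_mono fun y => ?_
  by_cases hy : y ∈ B
  · have : x + l • (y - x) ∈ B := (convex_ball (0 : En n) 1).add_smul_sub_mem hx hy ⟨hl.le, hl1⟩
    simp [← hB, hy, this]
  · simp [← hB, hy]

lemma ae_comp_homothety {n : ℕ} {P : En n → Prop} (h : ∀ᵐ x, P x) (x : En n)
    {l : ℝ} (hl : 0 < l) : ∀ᵐ y, P (x + l • (y - x)) := by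
  obtain ⟨s, hs, hms, hs0⟩ := exists_measurable_superset_of_null (ae_iff.1 h)
  have h1 := lintegral_comp_homothety (f := s.indicator 1) (measurable_one.indicator hms) x hl
  rw [lintegral_indicator_one hms, hs0, mul_zero, lintegral_eq_zero_iff] at h1
  · filter_upwards [h1] with y hy
    by_contra hP
    have : x + l • (y - x) ∈ s := hs hP
    simp [this] at hy
  · exact (measurable_one.indicator hms).comp (by fun_prop)

lemma rpow_lintegral_le_lintegral_rpow {X : Type*} [MeasurableSpace X] {μ : Measure X}
    [IsProbabilityMeasure μ] {f : X → ENNReal} (hf : AEMeasurable f μ) {p : ℝ} (hp : 1 ≤ p) :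
    (∫⁻ x, f x ∂μ) ^ p ≤ ∫⁻ x, f x ^ p ∂μ := by
  rcases hp.eq_or_lt with rfl | hp
  · simp
  have h := ENNReal.lintegral_mul_le_Lp_mul_Lq μ (Real.HolderConjugate.conjExponent hp) hf
    (aemeasurable_const (b := (1 : ENNReal)))
  simp only [Pi.mul_apply, mul_one, ENNReal.one_rpow, lintegral_const, measure_univ] at h
  calc (∫⁻ x, f x ∂μ) ^ p ≤ ((∫⁻ x, f x ^ p ∂μ) ^ (1 / p)) ^ p := by gcongr
    _ = _ := by rw [← ENNReal.rpow_mul, one_div_mul_cancel (by positivity), ENNReal.rpow_one]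

/-- Integration of the gradient along the reparametrized segments `s ↦ x + s² (y - x)`. -/
lemma LipschitzWith.ae_enorm_sub_le_lintegral {n : ℕ} {v : En n → ℝ} {K : NNReal}
    (hv : LipschitzWith K v) (x : En n) :
    ∀ᵐ y, ‖v y - v x‖ₑ ≤ ∫⁻ s in Ioo (0 : ℝ) 1,
      ENNReal.ofReal (2 * s) * (‖y - x‖ₑ * ‖fderiv ℝ v (x + s ^ 2 • (y - x))‖ₑ) := by
  have hd : MeasurableSet {w | DifferentiableAt ℝ v w} := measurableSet_of_differentiableAt ℝ v
  have hγ : Measurable fun z : ℝ × En n => x + z.1 ^ 2 • (z.2 - x) := by fun_prop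
  have h1 : ∀ᵐ s ∂(volume.restrict (Ioo (0 : ℝ) 1)), ∀ᵐ y : En n,
      DifferentiableAt ℝ v (x + s ^ 2 • (y - x)) := by
    filter_upwards [ae_restrict_mem measurableSet_Ioo] with s hs
    exact ae_comp_homothety hv.ae_differentiableAt x (pow_pos hs.1 2)
  have h2 := (Measure.ae_ae_comm (μ := volume.restrict (Ioo (0 : ℝ) 1)) (ν := volume)
    (p := fun s (y : En n) => DifferentiableAt ℝ v (x + s ^ 2 • (y - x))) (hγ hd)).1 h1
  filter_upwards [h2] with y hy
  set c : ℝ → En n := fun s => x + s ^ 2 • (y - x) with hc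
  have hcd : ∀ s, HasDerivAt c ((2 * s) • (y - x)) s := fun s => by
    simpa [hc] using ((hasDerivAt_pow 2 s).smul_const (y - x)).const_add x
  have hcC : ContDiff ℝ 1 c := by fun_prop
  obtain ⟨L, hL⟩ := (hcC.locallyLipschitz).locallyLipschitzOn.exists_lipschitzOnWith_of_compact
    (isCompact_Icc (a := (0 : ℝ)) (b := 1))
  have hac : AbsolutelyContinuousOnInterval (v ∘ c) 0 1 := by
    apply LipschitzOnWith.absolutelyContinuousOnInterval (K := K * L)
    rw [uIcc_of_le zero_le_one]
    exact (hv.comp_lipschitzOnWith hL)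
  have hftc := hac.integral_deriv_eq_sub
  have e : v y - v x = ∫ s in Ioo (0 : ℝ) 1, deriv (v ∘ c) s := by
    rw [← integral_Ioc_eq_integral_Ioo, ← intervalIntegral.integral_of_le zero_le_one, hftc]
    simp [hc]
  rw [e]
  refine (enorm_integral_le_lintegral_enorm _).trans (lintegral_mono_ae ?_)
  filter_upwards [hy, ae_restrict_mem measurableSet_Ioo] with s hs hs01
  have : deriv (v ∘ c) s = fderiv ℝ v (c s) ((2 * s) • (y - x)) :=
    (hs.hasFDerivAt.comp_hasDerivAt s (hcd s)).deriv
  rw [this, map_smul, enorm_smul, Real.enorm_eq_ofReal (by linarith [hs01.1])]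
  gcongr
  rw [mul_comm]
  exact ContinuousLinearMap.le_opENorm _ _

instance isProbabilityMeasure_restrict_Ioo :
    IsProbabilityMeasure (volume.restrict (Ioo (0 : ℝ) 1)) :=
  ⟨by simp⟩

lemma integrable_unitAvg_of_continuous {n : ℕ} {f : En n → ℝ} (hf : Continuous f) :
    Integrable f (unitAvg n) := by
  have h : IntegrableOn f (ball 0 1) :=
    (hf.continuousOn.integrableOn_compact (isCompact_closedBall (0 : En n) 1)).mono_set
      ball_subset_closedBall
  exact h.smul_measure (ENNReal.inv_ne_top.2 (volume_unitBall_ne_zero n))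

lemma lintegral_unitAvg_comp_homothety_le_two_pow {n : ℕ} {f : En n → ENNReal}
    (hf : Measurable f) {l : ℝ} (hl : 0 < l) (hl1 : l < 1) :
    ∫⁻ x, ∫⁻ y, f (x + l • (y - x)) ∂unitAvg n ∂unitAvg n ≤
      ENNReal.ofReal (2 ^ n) * ∫⁻ y, f y ∂unitAvg n := by
  have key : ∀ t : ℝ, 1 / 2 ≤ t → t ≤ 1 →
      ∫⁻ x, ∫⁻ y, f (x + t • (y - x)) ∂unitAvg n ∂unitAvg n ≤
        ENNReal.ofReal (2 ^ n) * ∫⁻ y, f y ∂unitAvg n := by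
    intro t ht ht1
    calc ∫⁻ x, ∫⁻ y, f (x + t • (y - x)) ∂unitAvg n ∂unitAvg n
        ≤ ∫⁻ _x, ENNReal.ofReal (2 ^ n) * ∫⁻ y, f y ∂unitAvg n ∂unitAvg n := by
          refine lintegral_mono_ae ?_
          filter_upwards [ae_mem_unitBall n] with x hx
          refine (lintegral_unitAvg_comp_homothety_le hf hx (by linarith) ht1).trans ?_
          gcongr
          rw [← inv_pow]
          gcongr
          exact inv_le_of_inv_le₀ (by norm_num) (by linarith)
      _ = _ := by simp
  rcases le_total (1 / 2) l with h | h
  · exact key l h hl1.le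
  · rw [lintegral_lintegral_swap (by fun_prop)]
    convert key (1 - l) (by linarith) (by linarith) using 6 with y x
    module

/-- The Sobolev–Poincaré inequality on the unit ball, in the range `q ≤ p (1 + 1/n)`. -/
theorem exists_sobolev_poincare_unitBall {n : ℕ} (hn : 0 < n) {p q : ℝ} (hp : 1 ≤ p)
    (hpq : p ≤ q) (hq1 : 1 < q) (hq : q / p ≤ 1 + 1 / n) :
    ∃ C : ENNReal, C ≠ ⊤ ∧ ∀ (v : En n → ℝ) (K : NNReal), LipschitzWith K v →
      ∫⁻ x, ‖v x - ∫ y, v y ∂unitAvg n‖ₑ ^ q ∂unitAvg n ≤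
        C * (∫⁻ x, ‖fderiv ℝ v x‖ₑ ^ p ∂unitAvg n) ^ (q / p) := by
  have hp0 : 0 < p := by linarith
  have hq0 : 0 < q := by linarith
  have hqp : 0 ≤ q / p - 1 := by rw [sub_nonneg, one_le_div hp0]; exact hpq
  set c : ℝ → ENNReal := fun s => ENNReal.ofReal (4 * s) ^ q * ENNReal.ofReal ((s ^ 2)⁻¹) with hc
  have hcm : Measurable c := by fun_prop
  have hctop : ∫⁻ s in Ioo (0 : ℝ) 1, c s ≠ ⊤ := by
    have hi : IntegrableOn (fun s : ℝ => 4 ^ q * s ^ (q - 2)) (Ioo 0 1) :=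
      ((intervalIntegral.integrableOn_Ioo_rpow_iff zero_lt_one).2 (by linarith)).const_mul _
    have h2 : ∫⁻ s in Ioo (0 : ℝ) 1, c s =
        ∫⁻ s in Ioo (0 : ℝ) 1, ENNReal.ofReal (4 ^ q * s ^ (q - 2)) := by
      refine setLIntegral_congr_fun measurableSet_Ioo fun s hs => ?_
      have hs0 : 0 < s := hs.1
      simp only [hc]
      rw [ENNReal.ofReal_rpow_of_nonneg (by positivity) hq0.le, ← ENNReal.ofReal_mul (by positivity),
        Real.mul_rpow (by norm_num) hs0.le, mul_assoc, Real.rpow_sub hs0]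
      norm_cast
    rw [h2]
    exact hi.lintegral_lt_top.ne
  refine ⟨(∫⁻ s in Ioo (0 : ℝ) 1, c s) * ENNReal.ofReal (2 ^ n),
    ENNReal.mul_ne_top hctop ENNReal.ofReal_ne_top, fun v K hv => ?_⟩
  set g : En n → ENNReal := fun x => ‖fderiv ℝ v x‖ₑ with hg
  have hgm : Measurable g := (measurable_fderiv ℝ v).enorm
  set I := ∫⁻ x, g x ^ p ∂unitAvg n with hI
  set m := ∫ y, v y ∂unitAvg n with hm
  have hvi : Integrable v (unitAvg n) := integrable_unitAvg_of_continuous hv.continuous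
  set G : En n → ℝ → ENNReal := fun x s => ∫⁻ y, g (x + s ^ 2 • (y - x)) ^ p ∂unitAvg n with hG
  have hGm : Measurable (Function.uncurry G) := by
    refine Measurable.lintegral_prod_right' (f := fun z : (En n × ℝ) × En n =>
      g (z.1.1 + z.1.2 ^ 2 • (z.2 - z.1.1)) ^ p) ?_
    fun_prop
  have hpt : ∀ x ∈ ball (0 : En n) 1,
      ‖v x - m‖ₑ ^ q ≤ ∫⁻ s in Ioo (0 : ℝ) 1, c s * I ^ (q / p - 1) * G x s := by
    intro x hx
    have h1 : ‖v x - m‖ₑ ≤ ∫⁻ s in Ioo (0 : ℝ) 1, ENNReal.ofReal (4 * s) *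
        ∫⁻ y, g (x + s ^ 2 • (y - x)) ∂unitAvg n := by
      calc ‖v x - m‖ₑ = ‖∫ y, (v x - v y) ∂unitAvg n‖ₑ := by
            rw [integral_sub (integrable_const _) hvi]; simp [hm]
        _ ≤ ∫⁻ y, ‖v x - v y‖ₑ ∂unitAvg n := enorm_integral_le_lintegral_enorm _
        _ ≤ ∫⁻ y, (∫⁻ s in Ioo (0 : ℝ) 1,
              ENNReal.ofReal (4 * s) * g (x + s ^ 2 • (y - x))) ∂unitAvg n := by
            refine lintegral_mono_ae ?_
            filter_upwards [ae_mem_unitBall n, ae_unitAvg_of_ae (hv.ae_enorm_sub_le_lintegral x)]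
              with y hy hxy
            rw [← enorm_neg, neg_sub]
            refine hxy.trans (setLIntegral_mono' measurableSet_Ioo fun s hs => ?_)
            rw [← mul_assoc]
            gcongr
            have hyx : ‖y - x‖ ≤ 2 := by
              rw [mem_ball_zero_iff] at hx hy
              linarith [norm_sub_le y x]
            rw [← ofReal_norm, ← ENNReal.ofReal_mul (by linarith [hs.1])]
            apply ENNReal.ofReal_le_ofReal
            nlinarith [hs.1]
        _ = _ := by
            rw [lintegral_lintegral_swap (by fun_prop)]
            refine lintegral_congr fun s => ?_
            rw [lintegral_const_mul _ (by fun_prop)]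
    have hFm : Measurable fun s : ℝ => ∫⁻ y, g (x + s ^ 2 • (y - x)) ∂unitAvg n :=
      Measurable.lintegral_prod_right' (f := fun z : ℝ × En n => g (x + z.1 ^ 2 • (z.2 - x)))
        (by fun_prop)
    calc ‖v x - m‖ₑ ^ q ≤ _ := ENNReal.rpow_le_rpow h1 hq0.le
      _ ≤ _ := rpow_lintegral_le_lintegral_rpow (by fun_prop) hq1.le
      _ ≤ _ := by
        refine setLIntegral_mono' measurableSet_Ioo fun s hs => ?_
        have hs0 : 0 < s := hs.1
        have hF : (∫⁻ y, g (x + s ^ 2 • (y - x)) ∂unitAvg n) ^ q ≤ G x s ^ (q / p) := by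
          have := rpow_lintegral_le_lintegral_rpow (μ := unitAvg n)
            (f := fun y => g (x + s ^ 2 • (y - x))) (by fun_prop) hp
          calc _ = ((∫⁻ y, g (x + s ^ 2 • (y - x)) ∂unitAvg n) ^ p) ^ (q / p) := by
                rw [← ENNReal.rpow_mul, mul_div_cancel₀ _ hp0.ne']
            _ ≤ _ := by gcongr
        have hGle : G x s ≤ ENNReal.ofReal (((s ^ 2) ^ n)⁻¹) * I :=
          lintegral_unitAvg_comp_homothety_le (f := fun w => g w ^ p) (by fun_prop) hx
            (by positivity) (by nlinarith [hs.2])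
        have hpow : ENNReal.ofReal (((s ^ 2) ^ n)⁻¹) ^ (q / p - 1) ≤
            ENNReal.ofReal ((s ^ 2)⁻¹) := by
          rw [ENNReal.ofReal_rpow_of_nonneg (by positivity) hqp]
          apply ENNReal.ofReal_le_ofReal
          rw [← inv_pow, ← Real.rpow_natCast, ← Real.rpow_mul (by positivity)]
          have hb : 1 ≤ (s ^ 2)⁻¹ := (one_le_inv₀ (by positivity)).2 (by nlinarith [hs.2])
          calc _ ≤ (s ^ 2)⁻¹ ^ (1 : ℝ) := by
                apply Real.rpow_le_rpow_of_exponent_le hb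
                have hn' : (0 : ℝ) < n := by exact_mod_cast hn
                calc (n : ℝ) * (q / p - 1) ≤ n * (1 / n) := by gcongr; linarith
                  _ = 1 := by field_simp
            _ = _ := Real.rpow_one _
        calc _ = ENNReal.ofReal (4 * s) ^ q *
              (∫⁻ y, g (x + s ^ 2 • (y - x)) ∂unitAvg n) ^ q :=
              ENNReal.mul_rpow_of_nonneg _ _ hq0.le
          _ ≤ ENNReal.ofReal (4 * s) ^ q * (G x s ^ (q / p - 1) * G x s) := by
              gcongr
              refine hF.trans_eq ?_
              conv_rhs => rw [← ENNReal.rpow_one (G x s), ← ENNReal.rpow_mul,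
                ← ENNReal.rpow_add_of_nonneg _ _ (by simpa using hqp) zero_le_one]
              simp
          _ ≤ ENNReal.ofReal (4 * s) ^ q *
              ((ENNReal.ofReal ((s ^ 2)⁻¹) * I ^ (q / p - 1)) * G x s) := by
              gcongr
              calc _ ≤ _ := ENNReal.rpow_le_rpow hGle hqp
                _ = _ := ENNReal.mul_rpow_of_nonneg _ _ hqp
                _ ≤ _ := by gcongr
          _ = _ := by simp only [hc]; ring
  calc ∫⁻ x, ‖v x - m‖ₑ ^ q ∂unitAvg n
      ≤ ∫⁻ x, (∫⁻ s in Ioo (0 : ℝ) 1, c s * I ^ (q / p - 1) * G x s) ∂unitAvg n := by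
        refine lintegral_mono_ae ?_
        filter_upwards [ae_mem_unitBall n] with x hx using hpt x hx
    _ = ∫⁻ s in Ioo (0 : ℝ) 1, c s * I ^ (q / p - 1) * ∫⁻ x, G x s ∂unitAvg n := by
        rw [lintegral_lintegral_swap (by fun_prop)]
        refine lintegral_congr fun s => ?_
        rw [lintegral_const_mul _ (by fun_prop)]
    _ ≤ ∫⁻ s in Ioo (0 : ℝ) 1, c s * (I ^ (q / p - 1) * (ENNReal.ofReal (2 ^ n) * I)) := by
        refine setLIntegral_mono' measurableSet_Ioo fun s hs => ?_
        rw [mul_assoc]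
        gcongr
        exact lintegral_unitAvg_comp_homothety_le_two_pow (f := fun w => g w ^ p) (by fun_prop)
          (pow_pos hs.1 2) (by nlinarith [hs.1, hs.2])
    _ = _ := by
        rw [lintegral_mul_const _ hcm]
        have : I ^ (q / p) = I ^ (q / p - 1) * I := by
          conv_rhs => rw [← ENNReal.rpow_one I, ← ENNReal.rpow_mul,
            ← ENNReal.rpow_add_of_nonneg _ _ (by simpa using hqp) zero_le_one]
          simp
        rw [this]; ring

lemma gnorm_const_smul {n : ℕ} (w : En n → ℝ) {t : ℝ} (ht : 0 < t) (x : En n) :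
    gnorm (t • w) x = t * gnorm w x := by
  rw [gnorm, gnorm, fderiv_const_smul_field, Pi.smul_apply, norm_smul, Real.norm_of_nonneg ht.le]

lemma measurable_gnorm {n : ℕ} (w : En n → ℝ) : Measurable (gnorm w) :=
  (measurable_fderiv ℝ w).norm

lemma gnorm_nonneg {n : ℕ} (w : En n → ℝ) (x : En n) : 0 ≤ gnorm w x := norm_nonneg _

lemma smul_mem_Adm {n : ℕ} {E O : Set (En n)} {w : En n → ℝ} (hw : w ∈ Adm E O 1) {t : ℝ}
    (ht : 0 < t) : t • w ∈ Adm E O t := by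
  obtain ⟨⟨K, hK⟩, h1, h2⟩ := hw
  refine ⟨⟨‖t‖₊ * K, ?_⟩, fun x hx => ?_, fun x hx => ?_⟩
  · exact (lipschitzWith_smul t).comp_lipschitzOnWith hK
  · simpa using le_mul_of_one_le_right ht.le (h1 x hx)
  · simp [h2 x hx]

lemma phi_div_phiMinus_le {n : ℕ} {b : En n → ℝ} (hb0 : ∀ x, 0 ≤ b x) (O : Set (En n))
    (p q : ℝ) {t s : ℝ} (ht : 0 < t) (hs : 0 ≤ s) (x : En n) :
    phi b p q x (t * s) / phiMinus b p q O t ≤ s ^ p + t ^ (q - p) * (b x * s ^ q) := by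
  have ha : 0 ≤ aInfOn b O := Real.sInf_nonneg (by rintro _ ⟨y, -, rfl⟩; exact hb0 y)
  have htp : 0 < t ^ p := by positivity
  have htq : t ^ p * t ^ (q - p) = t ^ q := by rw [← Real.rpow_add ht]; ring_nf
  have hR : 0 ≤ s ^ p + t ^ (q - p) * (b x * s ^ q) := by
    have := hb0 x
    positivity
  have hden : t ^ p ≤ phiMinus b p q O t := by
    rw [phiMinus]
    have : 0 ≤ aInfOn b O * t ^ q := by positivity
    linarith
  rw [div_le_iff₀ (htp.trans_le hden)]
  calc phi b p q x (t * s) = (s ^ p + t ^ (q - p) * (b x * s ^ q)) * t ^ p := by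
        rw [phi, Real.mul_rpow ht.le hs, Real.mul_rpow ht.le hs, ← htq]; ring
    _ ≤ _ := by gcongr

/-- A lower bound for the infimal `φ`-capacity bounds the `p`-energy of every admissible function
from below: let the level tend to zero. -/
lemma le_integral_gnorm_rpow_of_le_capPhiInf {n : ℕ} {b : En n → ℝ} (hb0 : ∀ x, 0 ≤ b x)
    (hbc : Continuous b) {p q κ : ℝ} (hp : 0 < p) (hpq : p < q) {E : Set (En n)}
    (h : κ ≤ capPhiInf b p q E (ball 0 1)) {w : En n → ℝ} (hw : w ∈ Adm E (ball 0 1) 1) :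
    κ ≤ ∫ x in ball (0 : En n) 1, gnorm w x ^ p := by
  obtain ⟨K, hK⟩ := hw.1
  have hgK : ∀ x ∈ ball (0 : En n) 1, gnorm w x ≤ K := fun x hx =>
    norm_fderiv_le_of_lipschitzOn ℝ (isOpen_ball.mem_nhds hx) (hK.mono subset_closure)
  have hfin : volume (ball (0 : En n) 1) ≠ ⊤ := volume_unitBall_ne_top n
  have hint : ∀ s : ℝ, 0 < s → IntegrableOn (fun x => gnorm w x ^ s) (ball 0 1) := by
    intro s hs
    refine Measure.integrableOn_of_bounded (M := (K : ℝ) ^ s) hfin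
      ((measurable_gnorm w).pow_const s).aestronglyMeasurable ?_
    filter_upwards [ae_restrict_mem measurableSet_ball] with x hx
    have := gnorm_nonneg w x
    rw [Real.norm_of_nonneg (by positivity)]
    exact Real.rpow_le_rpow this (hgK x hx) hs.le
  have hbint : IntegrableOn (fun x => b x * gnorm w x ^ q) (ball 0 1) := by
    obtain ⟨M, hM⟩ := (isCompact_closedBall (0 : En n) 1).exists_bound_of_continuousOn
      hbc.continuousOn
    refine Integrable.bdd_mul (c := M) (hint q (hp.trans hpq)) hbc.aestronglyMeasurable ?_
    filter_upwards [ae_restrict_mem measurableSet_ball] with x hx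
    exact hM x (ball_subset_closedBall hx)
  have hnn : ∀ t : ℝ, 0 < t → ∀ (u : En n → ℝ) (x : En n),
      0 ≤ phi b p q x (gnorm u x) / phiMinus b p q (ball 0 1) t := by
    intro t ht u x
    have h1 := gnorm_nonneg u x
    have h2 := hb0 x
    have h3 : 0 ≤ aInfOn b (ball 0 1) :=
      Real.sInf_nonneg (by rintro _ ⟨y, -, rfl⟩; exact hb0 y)
    rw [phi, phiMinus]
    positivity
  have hlev0 : ∀ t : ℝ, 0 < t → ∀ y ∈ (fun u : En n → ℝ => ∫ x in ball (0 : En n) 1,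
      phi b p q x (gnorm u x) / phiMinus b p q (ball 0 1) t) '' Adm E (ball 0 1) t, 0 ≤ y := by
    rintro t ht _ ⟨u, -, rfl⟩
    exact integral_nonneg fun x => hnn t ht u x
  have key : ∀ t : ℝ, 0 < t → κ ≤ (∫ x in ball (0 : En n) 1, gnorm w x ^ p) +
      t ^ (q - p) * ∫ x in ball (0 : En n) 1, b x * gnorm w x ^ q := by
    intro t ht
    calc κ ≤ capPhiInf b p q E (ball 0 1) := h
      _ ≤ capPhiLevel b p q t E (ball 0 1) :=
        ciInf_le (f := fun t : Ioi (0 : ℝ) => capPhiLevel b p q t E (ball 0 1))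
          ⟨0, by rintro _ ⟨⟨s, hs⟩, rfl⟩; exact Real.sInf_nonneg (hlev0 s hs)⟩ ⟨t, ht⟩
      _ ≤ ∫ x in ball (0 : En n) 1, phi b p q x (gnorm (t • w) x) / phiMinus b p q (ball 0 1) t :=
        csInf_le ⟨0, hlev0 t ht⟩ ⟨t • w, smul_mem_Adm hw ht, rfl⟩
      _ ≤ ∫ x in ball (0 : En n) 1, (gnorm w x ^ p + t ^ (q - p) * (b x * gnorm w x ^ q)) := by
        refine integral_mono_of_nonneg (ae_of_all _ fun x => hnn t ht _ x)
          ((hint p hp).add (hbint.const_mul _)) (ae_of_all _ fun x => ?_)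
        simp only [gnorm_const_smul w ht]
        exact phi_div_phiMinus_le hb0 _ p q ht (gnorm_nonneg w x) x
      _ = _ := by rw [integral_add (hint p hp) (hbint.const_mul _), integral_const_mul]
  have hlim : Filter.Tendsto (fun t : ℝ => (∫ x in ball (0 : En n) 1, gnorm w x ^ p) +
      t ^ (q - p) * ∫ x in ball (0 : En n) 1, b x * gnorm w x ^ q) (nhdsWithin 0 (Ioi 0))
      (nhds (∫ x in ball (0 : En n) 1, gnorm w x ^ p)) := by
    have h1 : Filter.Tendsto (fun t : ℝ => t ^ (q - p)) (nhdsWithin 0 (Ioi 0)) (nhds 0) := by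
      have := (Real.continuousAt_rpow_const 0 (q - p) (Or.inr (by linarith))).tendsto
      rw [Real.zero_rpow (by linarith)] at this
      exact this.mono_left nhdsWithin_le_nhds
    simpa using (h1.mul_const _).const_add (∫ x in ball (0 : En n) 1, gnorm w x ^ p)
  refine ge_of_tendsto hlim ?_
  filter_upwards [self_mem_nhdsWithin] with t ht using key t ht

/-- A `2`-Lipschitz cutoff function: `1` on `B(0,1/2)` and `0` outside `B(0,1)`. -/
def cutoff (n : ℕ) (x : En n) : ℝ := max 0 (min 1 (2 * (1 - ‖x‖)))

lemma lipschitzWith_cutoff (n : ℕ) : LipschitzWith 2 (cutoff n) := by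
  have h : LipschitzWith 2 fun x : En n => 2 * (1 - ‖x‖) := by
    refine LipschitzWith.of_dist_le_mul fun x y => ?_
    rw [Real.dist_eq, dist_eq_norm, NNReal.coe_ofNat,
      show 2 * (1 - ‖x‖) - 2 * (1 - ‖y‖) = 2 * (‖y‖ - ‖x‖) by ring, abs_mul, abs_two,
      norm_sub_rev]
    gcongr
    exact abs_norm_sub_norm_le y x
  exact (h.const_min 1).const_max 0

lemma cutoff_nonneg {n : ℕ} (x : En n) : 0 ≤ cutoff n x := le_max_left _ _

lemma cutoff_le_one {n : ℕ} (x : En n) : cutoff n x ≤ 1 :=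
  max_le zero_le_one (min_le_left _ _)

lemma cutoff_eq_one {n : ℕ} {x : En n} (hx : ‖x‖ ≤ 1 / 2) : cutoff n x = 1 := by
  rw [cutoff, min_eq_left (by linarith), max_eq_right zero_le_one]

lemma cutoff_eq_zero {n : ℕ} {x : En n} (hx : ‖x‖ = 1) : cutoff n x = 0 := by
  simp [cutoff, hx]

lemma cutoff_mul_mem_Adm {n : ℕ} {v : En n → ℝ} {K : NNReal} (hv : LipschitzWith K v)
    {E : Set (En n)} (hE : E ⊆ closedBall 0 (1 / 2)) (hvE : ∀ x ∈ E, v x = 0) {m : ℝ}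
    (hm : m ≠ 0) : (fun x => cutoff n x * (m⁻¹ * (m - v x))) ∈ Adm E (ball 0 1) 1 := by
  refine ⟨?_, fun x hx => ?_, fun x hx => ?_⟩
  · rw [closure_ball _ one_ne_zero]
    have hh : LipschitzWith (‖m⁻¹‖₊ * K) fun x => m⁻¹ * (m - v x) := by
      refine LipschitzWith.of_dist_le_mul fun x y => ?_
      have := hv.dist_le_mul y x
      rw [dist_comm y x] at this
      rw [Real.dist_eq, show m⁻¹ * (m - v x) - m⁻¹ * (m - v y) = m⁻¹ * (v y - v x) by ring,
        abs_mul, NNReal.coe_mul, coe_nnnorm, Real.norm_eq_abs, mul_assoc]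
      gcongr
      exact this
    obtain ⟨M, hM⟩ := (isCompact_closedBall (0 : En n) 1).exists_bound_of_continuousOn
      hh.continuous.continuousOn
    refine ⟨‖m⁻¹‖₊ * K + M.toNNReal * 2, LipschitzOnWith.of_dist_le_mul fun x hx y hy => ?_⟩
    have h1 := hh.dist_le_mul x y
    have h2 := (lipschitzWith_cutoff n).dist_le_mul x y
    have h3 : |m⁻¹ * (m - v y)| ≤ M.toNNReal := (hM y hy).trans (Real.le_coe_toNNReal M)
    have h4 : |cutoff n x| ≤ 1 := by rw [abs_of_nonneg (cutoff_nonneg x)]; exact cutoff_le_one x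
    rw [Real.dist_eq] at h1 h2 ⊢
    set H : En n → ℝ := fun x => m⁻¹ * (m - v x) with hH
    calc |cutoff n x * H x - cutoff n y * H y|
        = |cutoff n x * (H x - H y) + H y * (cutoff n x - cutoff n y)| := by congr 1; ring
      _ ≤ |cutoff n x| * |H x - H y| + |H y| * |cutoff n x - cutoff n y| := by
          rw [← abs_mul, ← abs_mul]; exact abs_add_le _ _
      _ ≤ 1 * ((‖m⁻¹‖₊ * K : NNReal) * dist x y) + M.toNNReal * ((2 : NNReal) * dist x y) := by
          gcongr
      _ = _ := by push_cast; ring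
  · have := mem_closedBall_zero_iff.1 (hE hx)
    simp [cutoff_eq_one this, hvE x hx, hm]
  · rw [frontier_ball _ one_ne_zero, mem_sphere_zero_iff_norm] at hx
    simp [cutoff_eq_zero hx]

lemma ae_enorm_fderiv_cutoff_mul_le {n : ℕ} {v : En n → ℝ} {K : NNReal} (hv : LipschitzWith K v)
    (m : ℝ) : ∀ᵐ x : En n, ‖fderiv ℝ (fun x => cutoff n x * (m⁻¹ * (m - v x))) x‖ₑ ≤
      ‖m⁻¹‖ₑ * (‖fderiv ℝ v x‖ₑ + 2 * ‖v x - m‖ₑ) := by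
  filter_upwards [hv.ae_differentiableAt, (lipschitzWith_cutoff n).ae_differentiableAt]
    with x hx hηx
  have hd : HasFDerivAt (fun x => cutoff n x * (m⁻¹ * (m - v x)))
      (cutoff n x • (m⁻¹ • (-fderiv ℝ v x)) + (m⁻¹ * (m - v x)) • fderiv ℝ (cutoff n) x) x :=
    hηx.hasFDerivAt.mul ((hx.hasFDerivAt.const_sub m).const_mul m⁻¹)
  have hη : ‖fderiv ℝ (cutoff n) x‖ₑ ≤ 2 := by
    have := norm_fderiv_le_of_lipschitz ℝ (x₀ := x) (lipschitzWith_cutoff n)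
    rw [← ofReal_norm]
    simpa using ENNReal.ofReal_le_ofReal this
  have h1 : ‖cutoff n x‖ₑ ≤ 1 := by
    rw [Real.enorm_eq_ofReal (cutoff_nonneg x)]
    simpa using cutoff_le_one x
  rw [hd.fderiv]
  calc _ ≤ ‖cutoff n x‖ₑ * (‖m⁻¹‖ₑ * ‖fderiv ℝ v x‖ₑ) +
        ‖m⁻¹‖ₑ * ‖v x - m‖ₑ * ‖fderiv ℝ (cutoff n) x‖ₑ := by
        refine (enorm_add_le (cutoff n x • (m⁻¹ • (-fderiv ℝ v x)))
          ((m⁻¹ * (m - v x)) • fderiv ℝ (cutoff n) x)).trans_eq ?_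
        rw [enorm_smul, enorm_smul, enorm_neg, enorm_smul, enorm_mul, ← enorm_neg (m - v x), neg_sub]
    _ ≤ 1 * (‖m⁻¹‖ₑ * ‖fderiv ℝ v x‖ₑ) + ‖m⁻¹‖ₑ * ‖v x - m‖ₑ * 2 := by gcongr
    _ = _ := by ring

/-- Maz'ya's estimate: the mean of a Lipschitz function vanishing on a set of positive
`p`-capacity is controlled by the energy of the function. -/
lemma exists_enorm_mean_rpow_le {n : ℕ} (hn : 0 < n) {p κ : ℝ} (hp : 1 < p) (hκ : 0 < κ) :
    ∃ C : ENNReal, C ≠ ⊤ ∧ ∀ (v : En n → ℝ) (K : NNReal) (E : Set (En n)), LipschitzWith K v →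
      E ⊆ closedBall 0 (1 / 2) → (∀ x ∈ E, v x = 0) →
      (∀ w ∈ Adm E (ball 0 1) 1, κ ≤ ∫ x in ball (0 : En n) 1, gnorm w x ^ p) →
      ‖∫ y, v y ∂unitAvg n‖ₑ ^ p ≤ C * ∫⁻ x, ‖fderiv ℝ v x‖ₑ ^ p ∂unitAvg n := by
  have hp0 : 0 < p := by linarith
  obtain ⟨C₀, hC₀, hSP⟩ := exists_sobolev_poincare_unitBall hn hp.le le_rfl hp
    (by rw [div_self hp0.ne']; simp)
  set V := volume (ball (0 : En n) 1) with hV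
  have hκ' : ENNReal.ofReal κ ≠ 0 := by simpa using hκ
  refine ⟨(ENNReal.ofReal κ)⁻¹ * (V * (2 ^ (p - 1) * (1 + 2 ^ p * C₀))), ?_, ?_⟩
  · refine ENNReal.mul_ne_top (ENNReal.inv_ne_top.2 hκ') (ENNReal.mul_ne_top
      (volume_unitBall_ne_top n) (ENNReal.mul_ne_top ?_ (ENNReal.add_ne_top.2
        ⟨ENNReal.one_ne_top, ENNReal.mul_ne_top ?_ hC₀⟩)))
    · exact ENNReal.rpow_ne_top_of_nonneg (by linarith) (by simp)
    · exact ENNReal.rpow_ne_top_of_nonneg (by linarith) (by simp)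
  intro v K E hv hE hvE hcap
  have hSPv := hSP v K hv
  rw [div_self hp0.ne', ENNReal.rpow_one] at hSPv
  set m := ∫ y, v y ∂unitAvg n with hm
  set I := ∫⁻ x, ‖fderiv ℝ v x‖ₑ ^ p ∂unitAvg n with hI
  rcases eq_or_ne m 0 with h0 | h0
  · simp [h0, ENNReal.zero_rpow_of_pos hp0]
  set w : En n → ℝ := fun x => cutoff n x * (m⁻¹ * (m - v x)) with hw
  have hvm : Measurable v := hv.continuous.measurable
  have hfm : Measurable fun x => ‖fderiv ℝ v x‖ₑ := (measurable_fderiv ℝ v).enorm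
  have hfw : ∫⁻ x, ‖fderiv ℝ w x‖ₑ ^ p ∂unitAvg n ≤
      ‖m⁻¹‖ₑ ^ p * (2 ^ (p - 1) * (1 + 2 ^ p * C₀)) * I := by
    calc _ ≤ ∫⁻ x, ‖m⁻¹‖ₑ ^ p * (2 ^ (p - 1) *
          (‖fderiv ℝ v x‖ₑ ^ p + 2 ^ p * ‖v x - m‖ₑ ^ p)) ∂unitAvg n := by
          refine lintegral_mono_ae ?_
          filter_upwards [ae_unitAvg_of_ae (ae_enorm_fderiv_cutoff_mul_le hv m)] with x hx
          refine (ENNReal.rpow_le_rpow hx hp0.le).trans ?_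
          rw [ENNReal.mul_rpow_of_nonneg _ _ hp0.le, ← ENNReal.mul_rpow_of_nonneg 2 _ hp0.le]
          gcongr
          exact ENNReal.rpow_add_le_mul_rpow_add_rpow _ _ hp.le
      _ = ‖m⁻¹‖ₑ ^ p * (2 ^ (p - 1) * (I + 2 ^ p * ∫⁻ x, ‖v x - m‖ₑ ^ p ∂unitAvg n)) := by
          rw [lintegral_const_mul _ (by fun_prop), lintegral_const_mul _ (by fun_prop),
            lintegral_add_left (by fun_prop), lintegral_const_mul _ (by fun_prop)]
      _ ≤ ‖m⁻¹‖ₑ ^ p * (2 ^ (p - 1) * (I + 2 ^ p * (C₀ * I))) := by gcongr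
      _ = _ := by ring
  have hκw : ENNReal.ofReal κ ≤ V * ∫⁻ x, ‖fderiv ℝ w x‖ₑ ^ p ∂unitAvg n := by
    have h1 := hcap w (cutoff_mul_mem_Adm hv hE hvE h0)
    rw [integral_eq_lintegral_of_nonneg_ae
      (ae_of_all _ fun x => Real.rpow_nonneg (gnorm_nonneg w x) p)
      ((measurable_gnorm w).pow_const p).aestronglyMeasurable] at h1
    refine (ENNReal.ofReal_le_of_le_toReal h1).trans_eq ?_
    rw [lintegral_unitAvg, ← mul_assoc, ENNReal.mul_inv_cancel (volume_unitBall_ne_zero n)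
      (volume_unitBall_ne_top n), one_mul]
    refine lintegral_congr fun x => ?_
    rw [← ENNReal.ofReal_rpow_of_nonneg (gnorm_nonneg w x) hp0.le, gnorm, ofReal_norm]
  have hmm : ‖m‖ₑ ^ p * ‖m⁻¹‖ₑ ^ p = 1 := by
    rw [← ENNReal.mul_rpow_of_nonneg _ _ hp0.le, ← enorm_mul, mul_inv_cancel₀ h0]
    simp
  calc ‖m‖ₑ ^ p = (ENNReal.ofReal κ)⁻¹ * (‖m‖ₑ ^ p * ENNReal.ofReal κ) := by
        rw [mul_left_comm, ENNReal.inv_mul_cancel hκ' ENNReal.ofReal_ne_top, mul_one]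
    _ ≤ (ENNReal.ofReal κ)⁻¹ *
        (‖m‖ₑ ^ p * (V * (‖m⁻¹‖ₑ ^ p * (2 ^ (p - 1) * (1 + 2 ^ p * C₀)) * I))) := by
        gcongr
        exact hκw.trans (by gcongr)
    _ = (‖m‖ₑ ^ p * ‖m⁻¹‖ₑ ^ p) *
        ((ENNReal.ofReal κ)⁻¹ * (V * (2 ^ (p - 1) * (1 + 2 ^ p * C₀))) * I) := by ring
    _ = _ := by rw [hmm, one_mul]

/-- The Sobolev–Poincaré inequality without mean value, for functions vanishing on a set of
positive `p`-capacity. -/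
theorem exists_sobolev_poincare_of_capacity {n : ℕ} (hn : 0 < n) {p q κ : ℝ} (hp : 1 < p)
    (hpq : p ≤ q) (hq : q / p ≤ 1 + 1 / n) (hκ : 0 < κ) :
    ∃ C : ENNReal, C ≠ ⊤ ∧ ∀ (v : En n → ℝ) (K : NNReal) (E : Set (En n)), LipschitzWith K v →
      E ⊆ closedBall 0 (1 / 2) → (∀ x ∈ E, v x = 0) →
      (∀ w ∈ Adm E (ball 0 1) 1, κ ≤ ∫ x in ball (0 : En n) 1, gnorm w x ^ p) →
      ∫⁻ x, ‖v x‖ₑ ^ q ∂unitAvg n ≤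
        C * (∫⁻ x, ‖fderiv ℝ v x‖ₑ ^ p ∂unitAvg n) ^ (q / p) := by
  have hp0 : 0 < p := by linarith
  have hq1 : 1 < q := by linarith
  have hqp : 0 ≤ q / p := by positivity
  obtain ⟨C₁, hC₁, h₁⟩ := exists_sobolev_poincare_unitBall hn hp.le hpq hq1 hq
  obtain ⟨C₂, hC₂, h₂⟩ := exists_enorm_mean_rpow_le hn hp hκ
  refine ⟨2 ^ (q - 1) * (C₁ + C₂ ^ (q / p)), ENNReal.mul_ne_top
    (ENNReal.rpow_ne_top_of_nonneg (by linarith) (by simp))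
    (ENNReal.add_ne_top.2 ⟨hC₁, ENNReal.rpow_ne_top_of_nonneg hqp hC₂⟩), ?_⟩
  intro v K E hv hE hvE hcap
  have h₁' := h₁ v K hv
  have h₂' := h₂ v K E hv hE hvE hcap
  set m := ∫ y, v y ∂unitAvg n
  set I := ∫⁻ x, ‖fderiv ℝ v x‖ₑ ^ p ∂unitAvg n
  have hvm : Measurable v := hv.continuous.measurable
  have hmq : ‖m‖ₑ ^ q ≤ C₂ ^ (q / p) * I ^ (q / p) := by
    rw [← ENNReal.mul_rpow_of_nonneg _ _ hqp]
    calc ‖m‖ₑ ^ q = (‖m‖ₑ ^ p) ^ (q / p) := by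
          rw [← ENNReal.rpow_mul, mul_div_cancel₀ _ hp0.ne']
      _ ≤ _ := by gcongr
  calc ∫⁻ x, ‖v x‖ₑ ^ q ∂unitAvg n
      ≤ ∫⁻ x, 2 ^ (q - 1) * (‖v x - m‖ₑ ^ q + ‖m‖ₑ ^ q) ∂unitAvg n := by
        refine lintegral_mono fun x => ?_
        refine le_trans ?_ (ENNReal.rpow_add_le_mul_rpow_add_rpow _ _ hq1.le)
        gcongr
        simpa using enorm_add_le (v x - m) m
    _ = 2 ^ (q - 1) * (∫⁻ x, ‖v x - m‖ₑ ^ q ∂unitAvg n + ‖m‖ₑ ^ q) := by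
        rw [lintegral_const_mul _ (by fun_prop), lintegral_add_left (by fun_prop)]
        simp
    _ ≤ 2 ^ (q - 1) * (C₁ * I ^ (q / p) + C₂ ^ (q / p) * I ^ (q / p)) := by gcongr
    _ = _ := by ring

lemma setAverage_ball_eq_integral_unitAvg {n : ℕ} (F : En n → ℝ) (z : En n) {r : ℝ}
    (hr : 0 < r) : ⨍ x in ball z r, F x = ∫ x, F (z + r • x) ∂unitAvg n := by
  have h1 : ∫ x in ball z r, F x = ∫ x in ball (0 : En n) r, F (z + x) := by
    rw [← (measurePreserving_add_left volume z).setIntegral_preimage_emb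
      (measurableEmbedding_addLeft z) F (ball z r)]
    simp
  have h2 : ∫ x in ball (0 : En n) 1, F (z + r • x) =
      (r ^ n)⁻¹ * ∫ x in ball (0 : En n) r, F (z + x) := by
    rw [Measure.setIntegral_comp_smul_of_pos volume (fun x => F (z + x)) _ hr,
      smul_unitBall_of_pos hr]
    simp
  rw [setAverage_eq, h1, unitAvg, integral_smul_measure, h2, measureReal_def,
    Measure.addHaar_ball_of_pos volume z hr]
  simp [ENNReal.toReal_mul, ENNReal.toReal_ofReal (pow_nonneg hr.le n)]
  ring

lemma gnorm_comp_add_smul {n : ℕ} (u : En n → ℝ) (z : En n) {r : ℝ} (hr : 0 < r) (x : En n) :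
    gnorm (fun x => u (z + r • x)) x = r * gnorm u (z + r • x) := by
  have h := fderiv_comp_smul (𝕜 := ℝ) (f := fun y => u (z + y)) (x := x) r
  rw [gnorm, h, fderiv_comp_add_left, norm_smul, Real.norm_of_nonneg hr.le, gnorm]

lemma continuous_of_abs_sub_le_dist_rpow {X : Type*} [PseudoMetricSpace X] {a : X → ℝ} {A α : ℝ}
    (hα : 0 < α) (h : ∀ x y, |a x - a y| ≤ A * dist x y ^ α) : Continuous a := by
  refine continuous_iff_continuousAt.2 fun y => tendsto_iff_dist_tendsto_zero.2 ?_
  refine squeeze_zero (fun _ => dist_nonneg) (fun x => h x y) ?_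
  have hc : Continuous fun x => A * dist x y ^ α :=
    continuous_const.mul ((continuous_id.dist continuous_const).rpow_const fun _ => Or.inr hα.le)
  simpa [Real.zero_rpow hα.ne'] using hc.tendsto y

lemma ofReal_integral_gnorm_rpow {n : ℕ} {v : En n → ℝ} {K : NNReal} (hv : LipschitzWith K v)
    {p : ℝ} (hp : 0 ≤ p) : ENNReal.ofReal (∫ x, gnorm v x ^ p ∂unitAvg n) =
      ∫⁻ x, ‖fderiv ℝ v x‖ₑ ^ p ∂unitAvg n := by
  have hi : Integrable (fun x => gnorm v x ^ p) (unitAvg n) := by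
    refine Integrable.of_bound ((measurable_gnorm v).pow_const p).aestronglyMeasurable
      ((K : ℝ) ^ p) (ae_of_all _ fun x => ?_)
    rw [Real.norm_of_nonneg (Real.rpow_nonneg (gnorm_nonneg v x) p)]
    exact Real.rpow_le_rpow (gnorm_nonneg v x) (norm_fderiv_le_of_lipschitz ℝ hv) hp
  rw [ofReal_integral_eq_lintegral_ofReal hi
    (ae_of_all _ fun x => Real.rpow_nonneg (gnorm_nonneg v x) p)]
  refine lintegral_congr fun x => ?_
  rw [← ENNReal.ofReal_rpow_of_nonneg (gnorm_nonneg v x) hp, gnorm, ofReal_norm]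

lemma continuous_abs_rpow {n : ℕ} {v : En n → ℝ} (hv : Continuous v) {q : ℝ} (hq : 0 ≤ q) :
    Continuous fun x => |v x| ^ q :=
  hv.abs.rpow_const fun _ => Or.inr hq

lemma ofReal_integral_abs_rpow {n : ℕ} {v : En n → ℝ} (hv : Continuous v) {q : ℝ} (hq : 0 ≤ q) :
    ENNReal.ofReal (∫ x, |v x| ^ q ∂unitAvg n) = ∫⁻ x, ‖v x‖ₑ ^ q ∂unitAvg n := by
  rw [ofReal_integral_eq_lintegral_ofReal
    (integrable_unitAvg_of_continuous (continuous_abs_rpow hv hq))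
    (ae_of_all _ fun x => by positivity)]
  refine lintegral_congr fun x => ?_
  rw [← ENNReal.ofReal_rpow_of_nonneg (abs_nonneg _) hq, Real.enorm_eq_ofReal_abs]

/-- The boundary Sobolev–Poincaré inequality on balls of the complement of `Ω`. -/
theorem exists_boundary_sobolev_poincare {n : ℕ} (hn : 0 < n) {p q s κ : ℝ} (hp : 1 < p)
    (hpq : p < q) (hps : p ≤ s) (hs : s / p ≤ 1 + 1 / n) (hκ : 0 < κ) :
    ∃ C : ℝ, 0 ≤ C ∧ ∀ (ro : ℝ) (a : En n → ℝ) (Ω : Set (En n)), Continuous a →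
      (∀ x, 0 ≤ a x) → LocUnifPhiFat a p q Ωᶜ κ ro → ∀ z ∈ Ωᶜ, ∀ r : ℝ, 0 < r → r < ro →
      ∀ u ∈ Lip0 Ω, ⨍ x in ball z r, |u x| ^ s ≤
        C * (⨍ x in ball z r, (r * gnorm u x) ^ p) ^ (s / p) := by
  have hp0 : 0 < p := by linarith
  have hs0 : 0 ≤ s := by linarith
  have hsp : 0 ≤ s / p := by positivity
  obtain ⟨C, hC, h⟩ := exists_sobolev_poincare_of_capacity hn hp hps hs hκ
  refine ⟨C.toReal, ENNReal.toReal_nonneg, ?_⟩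
  rintro ro a Ω hac ha0 hfat z hz r hr hrro u ⟨⟨K, hK⟩, -, hsupp⟩
  set v : En n → ℝ := fun x => u (z + r • x) with hv
  have hvl : LipschitzWith (K * ‖r‖₊) v := by
    refine hK.comp (g := fun x : En n => z + r • x) (LipschitzWith.of_dist_le_mul fun x y => ?_)
    simp [dist_smul₀]
  have hmain := h v _ (shiftedSet Ωᶜ z r) hvl (fun x hx => hx.1)
    (fun x hx => by
      by_contra hne
      exact hx.2 (hsupp (subset_tsupport u hne)))
    (fun w hw => le_integral_gnorm_rpow_of_le_capPhiInf (fun x => ha0 _)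
      (hac.comp (by fun_prop)) hp0 hpq (hfat z hz r hr hrro) hw)
  rw [← ofReal_integral_abs_rpow hvl.continuous hs0, ← ofReal_integral_gnorm_rpow hvl hp0.le,
    ENNReal.ofReal_rpow_of_nonneg
      (integral_nonneg fun x => Real.rpow_nonneg (gnorm_nonneg v x) p) hsp,
    ← ENNReal.ofReal_toReal hC, ← ENNReal.ofReal_mul ENNReal.toReal_nonneg] at hmain
  have hJ : 0 ≤ ∫ x, gnorm v x ^ p ∂unitAvg n :=
    integral_nonneg fun x => Real.rpow_nonneg (gnorm_nonneg v x) p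
  rw [ENNReal.ofReal_le_ofReal_iff (by positivity)] at hmain
  rw [setAverage_ball_eq_integral_unitAvg _ z hr, setAverage_ball_eq_integral_unitAvg _ z hr]
  simpa only [hv, gnorm_comp_add_smul u z hr] using hmain

/-- **Boundary Poincaré inequality from fatness** (Theorem 1.9, (2) ⇒ (3)).
If `ℝⁿ ∖ Ω` satisfies the local infimal `φ`-capacity density condition, then the
boundary Poincaré inequality holds for balls centered in `ℝⁿ ∖ Ω`, for either
consistent choice of `a^±_{y,R}`. -/
theorem boundary_poincare_of_fatness
    (n : ℕ) (hn : 0 < n) (p q cfat : ℝ)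
    (hp : 1 < p) (hpq : p < q) (hcfat : 0 < cfat) :
    ∃ c : ℝ, 0 < c ∧
      ∀ (α A ro : ℝ) (a : En n → ℝ) (Ω : Set (En n)) (astar : En n → ℝ → ℝ),
        0 < α → α ≤ 1 → (∀ x, 0 ≤ a x) → 0 ≤ A →
        (∀ x y, |a x - a y| ≤ A * dist x y ^ α) →
        q / p ≤ 1 + α / n →
        IsOpen Ω → 0 < ro → ro ≤ 1 →
        LocUnifPhiFat a p q Ωᶜ cfat ro →
        ((∀ y R, astar y R = aSupOn a (ball y R)) ∨
         (∀ y R, astar y R = aInfOn a (ball y R))) →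
        ∀ z ∈ Ωᶜ, ∀ (y : En n) (r R : ℝ), 0 < r → r < ro → 0 < R →
          ∀ u ∈ Lip0 Ω,
            (⨍ x in ball z r, (|u x| ^ p + astar y R * |u x| ^ q)) ≤
              c * (1 + astar y R *
                    ((⨍ x in ball z r, (r * gnorm u x) ^ p) ^ (1 / p)) ^ (q - p)) *
                (⨍ x in ball z r, (r * gnorm u x) ^ p) := by
  have hp0 : 0 < p := by linarith
  by_cases hq : q / p ≤ 1 + 1 / n
  swap
  · refine ⟨1, one_pos, fun α A ro a Ω astar _ hα1 _ _ _ hqα => absurd (hqα.trans ?_) hq⟩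
    gcongr
  obtain ⟨C₁, hC₁, h₁⟩ := exists_boundary_sobolev_poincare hn hp hpq le_rfl
    (by rw [div_self hp0.ne']; simp) hcfat
  obtain ⟨C₂, hC₂, h₂⟩ := exists_boundary_sobolev_poincare hn hp hpq hpq.le hq hcfat
  refine ⟨C₁ + C₂ + 1, by positivity, ?_⟩
  intro α A ro a Ω astar hα _ ha0 _ hHol _ _ _ _ hfat hastar z hz y r R hr hrro _ u hu
  have hac := continuous_of_abs_sub_le_dist_rpow hα hHol
  have hb : 0 ≤ astar y R := by
    rcases hastar with h | h
    · rw [h]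
      exact Real.sSup_nonneg (by rintro _ ⟨x, -, rfl⟩; exact ha0 x)
    · rw [h]
      exact Real.sInf_nonneg (by rintro _ ⟨x, -, rfl⟩; exact ha0 x)
  have hp' := h₁ ro a Ω hac ha0 hfat z hz r hr hrro u hu
  have hq' := h₂ ro a Ω hac ha0 hfat z hz r hr hrro u hu
  rw [div_self hp0.ne', Real.rpow_one] at hp'
  have hJ : 0 ≤ ⨍ x in ball z r, (r * gnorm u x) ^ p := integral_nonneg fun x =>
    Real.rpow_nonneg (mul_nonneg hr.le (gnorm_nonneg u x)) p
  set J := ⨍ x in ball z r, (r * gnorm u x) ^ p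
  set b := astar y R
  obtain ⟨K, hK⟩ := hu.1
  have hi : ∀ s : ℝ, 0 ≤ s → Integrable (fun x => |u (z + r • x)| ^ s) (unitAvg n) := fun s hs =>
    integrable_unitAvg_of_continuous
      (continuous_abs_rpow (hK.continuous.comp (by fun_prop : Continuous fun x => z + r • x)) hs)
  have hsum : ⨍ x in ball z r, (|u x| ^ p + b * |u x| ^ q) =
      (⨍ x in ball z r, |u x| ^ p) + b * ⨍ x in ball z r, |u x| ^ q := by
    simp only [setAverage_ball_eq_integral_unitAvg _ z hr]
    rw [integral_add (hi p hp0.le) ((hi q (by linarith)).const_mul b), integral_const_mul]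
  have hpow : J ^ (q / p) = (J ^ (1 / p)) ^ (q - p) * J := by
    rcases hJ.eq_or_lt with h0 | h0
    · rw [← h0, Real.zero_rpow (by have := hp0.trans hpq; positivity), mul_zero]
    · rw [← Real.rpow_mul hJ, ← Real.rpow_add_one h0.ne']
      congr 1
      field_simp
      ring
  rw [hsum]
  set T := (J ^ (1 / p)) ^ (q - p)
  have hT : 0 ≤ T := Real.rpow_nonneg (Real.rpow_nonneg hJ _) _
  calc _ ≤ C₁ * J + b * (C₂ * J ^ (q / p)) := by gcongr
    _ = C₁ * J + C₂ * (b * T * J) := by rw [hpow]; ring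
    _ ≤ (C₁ + C₂ + 1) * J + (C₁ + C₂ + 1) * (b * T * J) := by
      gcongr <;> linarith
    _ = _ := by ring
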